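/- Let R be a Hom-finite Krull-Schmidt K-ringoid. Then the category of finitely presented right R-modules is a Krull-Schmidt category. -/

import Mathlib

/-!
Let `F` be the cokernel of a map of representables `P_a ⟶ P_b`, with projection `p : P_b ⟶ F`.

* By the Yoneda lemma an endomorphism `e` of `F` is determined by the element `(p ≫ e)(1_b)` of
  `F(b)`. Since `F(b)` is a quotient of `Hom(b, b)`, the `K`-module `End F` has finite length
  (`exists_injective_end`).
* A `K`-algebra of finite length that is neither zero nor local contains a nontrivial idempotent,
  by Fitting's lemma applied to left multiplication by an element `x` such that neither `x` nor
  `1 - x` is a unit (`exists_idempotent_of_not_isLocalRing`).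
* Idempotents split in the abelian category of functors, and the endomorphism modules of the two
  resulting summands are strictly shorter than `End F` (`length_end_lt`). Induction on the length
  decomposes `F` into summands with local endomorphism rings (`exists_localDecomposition`).
* A retract of `F` is again finitely presented: lifting the complementary idempotent to
  `P_b ⟶ P_b` gives the additional relations, so the retract is a cokernel of
  `P_{a ⊞ b} ⟶ P_b` (`FinPresented.of_retract`).
-/

open CategoryTheory CategoryTheory.Limits Opposite

attribute [local instance] CategoryTheory.Abelian.hasFiniteBiproducts

section

variable (K : Type) [CommRing K]
variable (C : Type) [SmallCategory C] [Preadditive C] [CategoryTheory.Linear K C]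

/-- A `K`-ringoid is Hom-finite if all its Hom `K`-modules have finite length. -/
def RingoidHomFinite : Prop := ∀ a b : C, IsFiniteLength K (a ⟶ b)

/-- Krull-Schmidt: every object is a finite direct sum of objects with local endomorphism
rings. -/
def IsKrullSchmidtCat (D : Type*) [Category D] [Preadditive D] [HasFiniteBiproducts D] : Prop :=
  ∀ X : D, ∃ (n : ℕ) (f : Fin n → D),
    (∀ i, IsLocalRing (End (f i))) ∧ Nonempty (X ≅ ⨁ f)

/-- Finitely presented right `R`-module: the cokernel of a map between (finite direct sums of)
representables. -/
noncomputable def FinPresented (F : Cᵒᵖ ⥤ ModuleCat.{0} K) : Prop :=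
  ∃ (a b : C) (f : (linearYoneda K C).obj a ⟶ (linearYoneda K C).obj b),
    Nonempty (F ≅ cokernel f)

/-! ### Idempotents in algebras of finite length -/

/-- A finite-length algebra that is neither zero nor local has a nontrivial idempotent. -/
theorem exists_idempotent_of_not_isLocalRing (k : Type*) {A : Type*} [CommRing k] [Ring A]
    [Algebra k A] [IsNoetherian k A] [IsArtinian k A] [Nontrivial A] (hA : ¬ IsLocalRing A) :
    ∃ e : A, e * e = e ∧ e ≠ 0 ∧ e ≠ 1 := by
  by_contra! H
  refine hA (IsLocalRing.of_isUnit_or_isUnit_one_sub_self fun x ↦ ?_)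
  obtain ⟨n, hn⟩ := Filter.eventually_atTop.mp
    (LinearMap.eventually_isCompl_ker_pow_range_pow (LinearMap.mulLeft k x))
  have hn := hn (n + 1) n.le_succ
  rw [LinearMap.pow_mulLeft] at hn
  -- Fitting decomposition of `1`: the kernel and the range are right ideals, so its component `e`
  -- in the kernel is idempotent.
  obtain ⟨e, he, f, ⟨y, hy⟩, hef⟩ := Submodule.mem_sup.mp
    (hn.sup_eq_top ▸ Submodule.mem_top : (1 : A) ∈ _ ⊔ _)
  rw [LinearMap.mem_ker, LinearMap.mulLeft_apply] at he
  rw [LinearMap.mulLeft_apply] at hy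
  have hidem : e * e = e := by
    have h1 : e - e * e = 0 := by
      refine Submodule.disjoint_def.mp hn.disjoint _ ?_ ⟨y * e, ?_⟩
      · rw [LinearMap.mem_ker, LinearMap.mulLeft_apply, mul_sub, ← mul_assoc, he, zero_mul,
          sub_zero]
      · rw [LinearMap.mulLeft_apply, ← mul_assoc, hy, eq_sub_of_add_eq' hef, sub_mul, one_mul]
    exact (sub_eq_zero.mp h1).symm
  by_cases h0 : e = 0
  · left
    rw [h0, zero_add] at hef
    -- `x ^ (n + 1)` has a right inverse, and finite length makes that inverse two-sided.
    have hxy : x ^ (n + 1) * y = 1 := by rw [hy, hef]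
    have hinj : Function.Injective (LinearMap.mulLeft k (x ^ (n + 1))) := by
      refine OrzechProperty.injective_of_surjective_endomorphism _ fun z ↦ ⟨y * z, ?_⟩
      rw [LinearMap.mulLeft_apply, ← mul_assoc, hxy, one_mul]
    have hyx : y * x ^ (n + 1) = 1 := hinj (by
      simp only [LinearMap.mulLeft_apply]
      rw [← mul_assoc, hxy, one_mul, mul_one])
    have hu : IsUnit (x ^ (n + 1)) := ⟨⟨x ^ (n + 1), y, hxy, hyx⟩, rfl⟩
    exact (isUnit_pow_iff n.succ_ne_zero).mp hu
  · right
    rw [H e hidem h0, mul_one] at he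
    exact IsNilpotent.isUnit_one_sub ⟨n + 1, he⟩

/-! ### Decompositions into objects with local endomorphism rings -/

section Decomposition

universe v u

variable {D : Type u} [Category.{v} D] [Preadditive D]

/-- A decomposition of `X` as a finite direct sum of objects with local endomorphism rings, given
by its inclusions and projections. The indexing type is arbitrary so that decompositions can be
combined over a disjoint union. -/
structure LocalDecomposition (X : D) where
  /-- The index type of the summands. -/
  J : Type
  /-- There are finitely many summands. -/
  fintype : Fintype J
  /-- The summands. -/
  G : J → D
  /-- The inclusions. -/
  ι : ∀ j, G j ⟶ X
  /-- The projections. -/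
  π : ∀ j, X ⟶ G j
  isLocalRing : ∀ j, IsLocalRing (End (G j))
  ι_π_self : ∀ j, ι j ≫ π j = 𝟙 _
  ι_π_ne : ∀ j k, j ≠ k → ι j ≫ π k = 0
  total : ∑ j, π j ≫ ι j = 𝟙 X

attribute [instance] LocalDecomposition.fintype

/-- Local decompositions of two complementary summands combine to one of the whole object. -/
def LocalDecomposition.ofSummands {X Y Z : D} {i : Y ⟶ X} {p : X ⟶ Y} {j : Z ⟶ X} {q : X ⟶ Z}
    (hip : i ≫ p = 𝟙 Y) (hjq : j ≫ q = 𝟙 Z) (hiq : i ≫ q = 0) (hjp : j ≫ p = 0)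
    (hsum : p ≫ i + q ≫ j = 𝟙 X) (S : LocalDecomposition Y) (T : LocalDecomposition Z) :
    LocalDecomposition X where
  J := S.J ⊕ T.J
  fintype := inferInstance
  G := Sum.elim S.G T.G
  ι := fun | .inl a => S.ι a ≫ i | .inr a => T.ι a ≫ j
  π := fun | .inl a => p ≫ S.π a | .inr a => q ≫ T.π a
  isLocalRing := by rintro (a | a); exacts [S.isLocalRing a, T.isLocalRing a]
  ι_π_self := by
    rintro (a | a)
    · simp [reassoc_of% hip, S.ι_π_self]
    · simp [reassoc_of% hjq, T.ι_π_self]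
  ι_π_ne := by
    rintro (a | a) (b | b) hab
    · change (S.ι a ≫ i) ≫ p ≫ S.π b = 0
      simpa [reassoc_of% hip] using S.ι_π_ne a b (by simpa using hab)
    · change (S.ι a ≫ i) ≫ q ≫ T.π b = 0
      simp [reassoc_of% hiq]
    · change (T.ι a ≫ j) ≫ p ≫ S.π b = 0
      simp [reassoc_of% hjp]
    · change (T.ι a ≫ j) ≫ q ≫ T.π b = 0
      simpa [reassoc_of% hjq] using T.ι_π_ne a b (by simpa using hab)
  total := by
    have h1 : ∑ a, (p ≫ S.π a) ≫ S.ι a ≫ i = p ≫ i := by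
      have := congrArg (fun t ↦ p ≫ t ≫ i) S.total
      simpa [Preadditive.sum_comp, Preadditive.comp_sum] using this
    have h2 : ∑ a, (q ≫ T.π a) ≫ T.ι a ≫ j = q ≫ j := by
      have := congrArg (fun t ↦ q ≫ t ≫ j) T.total
      simpa [Preadditive.sum_comp, Preadditive.comp_sum] using this
    rw [Fintype.sum_sum_type, ← hsum, ← h1, ← h2]
    rfl

/-- Enumerating the index type turns a local decomposition into a biproduct over some `Fin n`. -/
theorem LocalDecomposition.exists_iso {X : D} [HasFiniteBiproducts D] (S : LocalDecomposition X) :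
    ∃ (n : ℕ) (σ : Fin n → S.J), Nonempty (X ≅ ⨁ fun t ↦ S.G (σ t)) := by
  let σ := (Fintype.equivFin S.J).symm
  refine ⟨Fintype.card S.J, σ,
    ⟨⟨biproduct.lift fun t ↦ S.π (σ t), biproduct.desc fun t ↦ S.ι (σ t), ?_, ?_⟩⟩⟩
  · rw [biproduct.lift_desc, ← S.total]
    exact σ.sum_comp fun a ↦ S.π a ≫ S.ι a
  · refine biproduct.hom_ext _ _ fun t ↦ biproduct.hom_ext' _ _ fun s ↦ ?_
    by_cases hst : s = t
    · subst hst
      simp [S.ι_π_self]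
    · have hne : σ s ≠ σ t := fun h ↦ hst (σ.injective h)
      simp [S.ι_π_ne _ _ hne, biproduct.ι_π_ne _ hst]

variable (k : Type*) [CommRing k] [Linear k D]

/-- Extending endomorphisms of a retract `Y` of `X` by zero. -/
def endOfRetract {X Y : D} (i : Y ⟶ X) (p : X ⟶ Y) : (Y ⟶ Y) →ₗ[k] (X ⟶ X) :=
  Linear.leftComp k X p ∘ₗ Linear.rightComp k Y i

theorem endOfRetract_injective {X Y : D} {i : Y ⟶ X} {p : X ⟶ Y} (hip : i ≫ p = 𝟙 Y) :
    Function.Injective (endOfRetract k i p) := by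
  intro g h hgh
  have : i ≫ (p ≫ g ≫ i) ≫ p = i ≫ (p ≫ h ≫ i) ≫ p := by
    have hgh' : p ≫ g ≫ i = p ≫ h ≫ i := by simpa [endOfRetract] using hgh
    rw [hgh']
  simpa [reassoc_of% hip, hip] using this

/-- The endomorphisms of a proper retract embed without hitting the identity. -/
theorem length_end_lt {X Y : D} [IsNoetherian k (X ⟶ X)] [IsArtinian k (X ⟶ X)]
    {i : Y ⟶ X} {p : X ⟶ Y} (hip : i ≫ p = 𝟙 Y) (hpi : p ≫ i ≠ 𝟙 X) :
    Module.length k (Y ⟶ Y) < Module.length k (X ⟶ X) := by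
  rw [(LinearEquiv.ofInjective _ (endOfRetract_injective k hip)).length_eq]
  refine Submodule.length_lt fun htop ↦ hpi ?_
  obtain ⟨g, hg⟩ := LinearMap.range_eq_top.mp htop (𝟙 X)
  have hg' : p ≫ g ≫ i = 𝟙 X := by simpa [endOfRetract] using hg
  calc p ≫ i = p ≫ i ≫ p ≫ g ≫ i := by rw [hg', Category.comp_id]
    _ = 𝟙 X := by rw [reassoc_of% hip, hg']

/-- By induction on the length of the endomorphism module: an object that is neither zero nor has a
local endomorphism ring splits along a nontrivial idempotent. -/
theorem exists_localDecomposition [IsIdempotentComplete D] (X : D)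
    [IsNoetherian k (X ⟶ X)] [IsArtinian k (X ⟶ X)] : Nonempty (LocalDecomposition X) := by
  by_cases h0 : 𝟙 X = 0
  · exact ⟨{ J := PEmpty, fintype := inferInstance, G := PEmpty.elim, ι := fun j ↦ j.elim,
             π := fun j ↦ j.elim, isLocalRing := fun j ↦ j.elim, ι_π_self := fun j ↦ j.elim,
             ι_π_ne := fun j ↦ j.elim, total := by simp [h0] }⟩
  by_cases hloc : IsLocalRing (End X)
  · exact ⟨{ J := PUnit, fintype := inferInstance, G := fun _ ↦ X, ι := fun _ ↦ 𝟙 X,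
             π := fun _ ↦ 𝟙 X, isLocalRing := fun _ ↦ hloc, ι_π_self := fun _ ↦ by simp,
             ι_π_ne := fun _ _ h ↦ (h rfl).elim, total := by simp }⟩
  have : Nontrivial (End X) := ⟨𝟙 X, 0, h0⟩
  have : IsNoetherian k (End X) := ‹IsNoetherian k (X ⟶ X)›
  have : IsArtinian k (End X) := ‹IsArtinian k (X ⟶ X)›
  obtain ⟨e, he', he0, he1⟩ : ∃ e : X ⟶ X, e ≫ e = e ∧ e ≠ 0 ∧ e ≠ 𝟙 X :=
    exists_idempotent_of_not_isLocalRing k hloc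
  obtain ⟨Y, i, p, hip, hpi⟩ := IsIdempotentComplete.idempotents_split X e he'
  obtain ⟨Z, j, q, hjq, hqj⟩ := IsIdempotentComplete.idempotents_split X (𝟙 X - e)
    (Idempotents.idem_of_id_sub_idem e he')
  have hiq : i ≫ q = 0 := by
    have : i ≫ q = (i ≫ p) ≫ i ≫ q ≫ j ≫ q := by rw [hip, hjq]; simp
    rw [this, reassoc_of% hqj, Category.assoc, reassoc_of% hpi]
    simp [reassoc_of% he']
  have hjp : j ≫ p = 0 := by
    have : j ≫ p = (j ≫ q) ≫ j ≫ p ≫ i ≫ p := by rw [hip, hjq]; simp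
    rw [this, reassoc_of% hpi, Category.assoc, reassoc_of% hqj]
    simp [reassoc_of% he']
  have hY : Module.length k (Y ⟶ Y) < Module.length k (X ⟶ X) :=
    length_end_lt k hip (hpi ▸ he1)
  have hZ : Module.length k (Z ⟶ Z) < Module.length k (X ⟶ X) :=
    length_end_lt k hjq (by rw [hqj]; exact fun h ↦ he0 (sub_eq_self.mp h))
  have := isNoetherian_of_injective _ (endOfRetract_injective k hip)
  have := isArtinian_of_injective _ (endOfRetract_injective k hip)
  have := isNoetherian_of_injective _ (endOfRetract_injective k hjq)
  have := isArtinian_of_injective _ (endOfRetract_injective k hjq)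
  obtain ⟨S⟩ := exists_localDecomposition Y
  obtain ⟨T⟩ := exists_localDecomposition Z
  exact ⟨.ofSummands hip hjq hiq hjp (by rw [hpi, hqj, add_sub_cancel]) S T⟩
termination_by Module.length k (X ⟶ X)

end Decomposition

/-! ### Finitely presented modules -/

section FinPresented

variable {K C}

/-- A map out of a representable is determined by its value at the identity. -/
theorem linearYoneda_hom_ext {b : C} {F : Cᵒᵖ ⥤ ModuleCat.{0} K}
    {u v : (linearYoneda K C).obj b ⟶ F}
    (h : (u.app (op b)).hom (𝟙 b) = (v.app (op b)).hom (𝟙 b)) : u = v := by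
  ext c (g : c.unop ⟶ b)
  have hu := congrArg (fun t ↦ t.hom (𝟙 b)) (u.naturality g.op)
  have hv := congrArg (fun t ↦ t.hom (𝟙 b)) (v.naturality g.op)
  change (u.app c).hom (g ≫ 𝟙 b) = (F.map g.op).hom ((u.app (op b)).hom (𝟙 b)) at hu
  change (v.app c).hom (g ≫ 𝟙 b) = (F.map g.op).hom ((v.app (op b)).hom (𝟙 b)) at hv
  rw [Category.comp_id] at hu hv
  rw [hu, hv, h]

theorem app_surjective {E : Type} [SmallCategory E] {F G : E ⥤ ModuleCat.{0} K} (p : F ⟶ G)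
    [Epi p] (c : E) :
    Function.Surjective (p.app c).hom :=
  (ModuleCat.epi_iff_surjective _).mp inferInstance

/-- Representables are projective, and the lift can be taken to come from `C`. -/
theorem exists_lift {b d : C} {F : Cᵒᵖ ⥤ ModuleCat.{0} K} (p : (linearYoneda K C).obj d ⟶ F) [Epi p]
    (u : (linearYoneda K C).obj b ⟶ F) : ∃ t : b ⟶ d, (linearYoneda K C).map t ≫ p = u := by
  obtain ⟨t, ht⟩ := app_surjective p (op b) ((u.app (op b)).hom (𝟙 b))
  change b ⟶ d at t
  refine ⟨t, linearYoneda_hom_ext ?_⟩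
  rw [← ht]
  change (p.app (op b)).hom (𝟙 b ≫ t) = _
  rw [Category.id_comp]

/-- The Yoneda embedding of `End F` into `F(b)`, for a quotient `F` of the representable `P_b`. -/
theorem exists_injective_end {b : C} {F : Cᵒᵖ ⥤ ModuleCat.{0} K}
    (p : (linearYoneda K C).obj b ⟶ F) [Epi p] :
    ∃ φ : (F ⟶ F) →ₗ[K] F.obj (op b), Function.Injective φ := by
  refine ⟨{ toFun := fun e ↦ ((p ≫ e).app (op b)).hom (𝟙 b)
            map_add' := fun e e' ↦ rfl
            map_smul' := fun r e ↦ rfl }, fun e e' h ↦ ?_⟩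
  exact (cancel_epi p).mp (linearYoneda_hom_ext h)

theorem linearYoneda_map_add {a b : C} (f g : a ⟶ b) :
    (linearYoneda K C).map (f + g) = (linearYoneda K C).map f + (linearYoneda K C).map g := by
  ext c (h : c.unop ⟶ a)
  exact Preadditive.comp_add _ _ _ h f g

/-- A retract of a cokernel of `P_a ⟶ P_b` is a cokernel of some `P_{a ⊞ b} ⟶ P_b`. -/
theorem FinPresented.of_retract [HasFiniteBiproducts C] {F G : Cᵒᵖ ⥤ ModuleCat.{0} K}
    (hF : FinPresented K C F) {s : G ⟶ F} {r : F ⟶ G} (hsr : s ≫ r = 𝟙 G) :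
    FinPresented K C G := by
  obtain ⟨a, b, f, ⟨α⟩⟩ := hF
  obtain ⟨φ, rfl⟩ := (linearYoneda K C).map_surjective f
  let Y := linearYoneda K C
  obtain ⟨p, hpα⟩ : ∃ p : Y.obj b ⟶ F, p = cokernel.π (Y.map φ) ≫ α.inv := ⟨_, rfl⟩
  have hp : Y.map φ ≫ p = 0 := by simp [hpα, Y]
  have hepi : Epi p := hpα ▸ inferInstanceAs (Epi (cokernel.π _ ≫ α.inv))
  obtain ⟨t, ht⟩ := exists_lift p (p ≫ (𝟙 F - r ≫ s))
  have hr : IsSplitEpi r := ⟨⟨s, hsr⟩⟩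
  have hbi : HasBinaryBiproducts C := hasBinaryBiproducts_of_finite_biproducts C
  let h : Y.obj (a ⊞ b) ⟶ Y.obj b := Y.map (biprod.desc φ t)
  have hinl : Y.map biprod.inl ≫ h = Y.map φ := by simp [h, ← Functor.map_comp]
  have hinr : Y.map biprod.inr ≫ h = Y.map t := by simp [h, ← Functor.map_comp]
  have hh : h = Y.map biprod.fst ≫ Y.map φ + Y.map biprod.snd ≫ Y.map t := by
    rw [← Functor.map_comp, ← Functor.map_comp]
    exact (congrArg Y.map (biprod.desc_eq ..)).trans (linearYoneda_map_add _ _)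
  have hzero : h ≫ p ≫ r = 0 := by
    have : Y.map t ≫ p ≫ r = 0 := by
      change (linearYoneda K C).map t ≫ p ≫ r = 0
      rw [← Category.assoc, ht]
      simp [hsr]
    rw [hh, Preadditive.add_comp, Category.assoc, Category.assoc, this, reassoc_of% hp]
    simp
  have hdesc {Z : Cᵒᵖ ⥤ ModuleCat.{0} K} {k : Y.obj b ⟶ Z} (hk : h ≫ k = 0) :
      Y.map φ ≫ k = 0 := by rw [← hinl, Category.assoc, hk, comp_zero]
  have hfac {Z : Cᵒᵖ ⥤ ModuleCat.{0} K} {k : Y.obj b ⟶ Z} (hk : h ≫ k = 0) :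
      (p ≫ r) ≫ s ≫ α.hom ≫ cokernel.desc (Y.map φ) k (hdesc hk) = k := by
    obtain ⟨k', hk_def⟩ : ∃ k', k' = α.hom ≫ cokernel.desc (Y.map φ) k (hdesc hk) := ⟨_, rfl⟩
    have hpk : p ≫ k' = k := by simp [hpα, hk_def]
    -- `k` kills the lift of the complementary idempotent, so `k'` factors through the retract.
    have h1 : (p ≫ (𝟙 F - r ≫ s)) ≫ k' = 0 := by
      rw [← ht, Category.assoc, hpk]
      change Y.map t ≫ k = 0
      rw [← hinr, Category.assoc, hk, comp_zero]
    rw [Preadditive.comp_sub, Preadditive.sub_comp, Category.comp_id, hpk, sub_eq_zero] at h1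
    simpa [hk_def] using h1.symm
  refine ⟨a ⊞ b, b, h, ⟨IsColimit.coconePointUniqueUpToIso (?_ : IsColimit
    (CokernelCofork.ofπ (p ≫ r) hzero)) (colimit.isColimit (parallelPair h 0))⟩⟩
  refine CokernelCofork.IsColimit.ofπ _ _
    (fun k hk ↦ s ≫ α.hom ≫ cokernel.desc (Y.map φ) k (hdesc hk))
    (fun k hk ↦ hfac hk) (fun k hk m hm ↦ (cancel_epi (p ≫ r)).mp (hm.trans (hfac hk).symm))

end FinPresented

/-- If `R` is a Hom-finite Krull-Schmidt `K`-ringoid, then the category of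
finitely presented right `R`-modules is Krull-Schmidt: every finitely presented module is a
finite direct sum of finitely presented modules with local endomorphism rings. -/
theorem finPresented_krullSchmidt [HasFiniteBiproducts C]
    (hfin : RingoidHomFinite K C) (hKS : IsKrullSchmidtCat C)
    (F : Cᵒᵖ ⥤ ModuleCat.{0} K) (hF : FinPresented K C F) :
    ∃ (n : ℕ) (G : Fin n → (Cᵒᵖ ⥤ ModuleCat.{0} K)),
      (∀ i, FinPresented K C (G i) ∧ IsLocalRing (End (G i))) ∧ Nonempty (F ≅ ⨁ G) := by
  obtain ⟨a, b, f, ⟨α⟩⟩ := id hF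
  let p : (linearYoneda K C).obj b ⟶ F := cokernel.π f ≫ α.inv
  obtain ⟨_, _⟩ := isFiniteLength_iff_isNoetherian_isArtinian.mp (hfin b b)
  have : IsNoetherian K (((linearYoneda K C).obj b).obj (op b)) := ‹IsNoetherian K (b ⟶ b)›
  have : IsArtinian K (((linearYoneda K C).obj b).obj (op b)) := ‹IsArtinian K (b ⟶ b)›
  have hp := app_surjective p (op b)
  have : IsNoetherian K (F.obj (op b)) :=
    isNoetherian_of_surjective _ (LinearMap.range_eq_top.mpr hp)
  have : IsArtinian K (F.obj (op b)) := isArtinian_of_surjective _ _ hp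
  obtain ⟨φ, hφ⟩ := exists_injective_end p
  have := isNoetherian_of_injective φ hφ
  have := isArtinian_of_injective φ hφ
  obtain ⟨S⟩ := exists_localDecomposition K F
  obtain ⟨n, σ, hσ⟩ := S.exists_iso
  exact ⟨n, fun t ↦ S.G (σ t),
    fun t ↦ ⟨hF.of_retract (S.ι_π_self (σ t)), S.isLocalRing (σ t)⟩, hσ⟩

end
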